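/- Assume in addition that κ₁(s) = 0 for all s ∈ I (the ruled surface is developable). Then for every s ∈ I with τ₁(s) ≠ 0 and every t ∈ ℝ: F(s,t) = σ(s) + ((t + ⟪r'(s), e'(s)⟫)/τ₁(s))·σ'(s). In other words, the developable surface is reparametrized as the tangent developable of its striction curve σ. -/

import Mathlib

noncomputable section
open scoped RealInnerProductSpace

/-- Euclidean 3-space `ℝ³`. -/
abbrev E3 : Type := EuclideanSpace ℝ (Fin 3)

/-- The cross product on `E3`. -/
def cross (u v : E3) : E3 :=
  (WithLp.equiv 2 (Fin 3 → ℝ)).symm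
    ![u 1 * v 2 - u 2 * v 1, u 2 * v 0 - u 0 * v 2, u 0 * v 1 - u 1 * v 0]

/-- Determinant of the 3×3 matrix with columns `u`, `v`, `w`. -/
def det3 (u v w : E3) : ℝ :=
  Matrix.det !![u 0, v 0, w 0; u 1, v 1, w 1; u 2, v 2, w 2]

namespace Ruled

/-- The director curve `e = v₀`. -/
def e (v₀ : ℝ → E3) : ℝ → E3 := v₀

/-- The base curve `r = v₀ × v₁`. -/
def r (v₀ v₁ : ℝ → E3) : ℝ → E3 := fun s => cross (v₀ s) (v₁ s)

/-- The parametrization `F(s,t) = r(s) + t • e(s)` of the ruled surface. -/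
def F (v₀ v₁ : ℝ → E3) (s t : ℝ) : E3 := r v₀ v₁ s + t • v₀ s

/-- `n₀ = v₀'`. -/
def n₀ (v₀ : ℝ → E3) : ℝ → E3 := fun s => deriv v₀ s

/-- `κ₁ = ⟪v₀', v₁'⟫`, the ε-part of the dual curvature. -/
def κ₁ (v₀ v₁ : ℝ → E3) : ℝ → ℝ := fun s => ⟪deriv v₀ s, deriv v₁ s⟫

/-- `n₁ = v₁' - κ₁ • v₀'`. -/
def n₁ (v₀ v₁ : ℝ → E3) : ℝ → E3 := fun s => deriv v₁ s - κ₁ v₀ v₁ s • deriv v₀ s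

/-- `t₀ = v₀ × n₀`. -/
def t₀ (v₀ : ℝ → E3) : ℝ → E3 := fun s => cross (v₀ s) (n₀ v₀ s)

/-- `t₁ = v₀ × n₁ + v₁ × n₀`. -/
def t₁ (v₀ v₁ : ℝ → E3) : ℝ → E3 :=
  fun s => cross (v₀ s) (n₁ v₀ v₁ s) + cross (v₁ s) (n₀ v₀ s)

/-- `τ₀ = ⟪n₀', t₀⟫`, the real part of the dual torsion. -/
def τ₀ (v₀ : ℝ → E3) : ℝ → ℝ := fun s => ⟪deriv (n₀ v₀) s, t₀ v₀ s⟫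

/-- `τ₁ = ⟪n₀', t₁⟫ + ⟪n₁', t₀⟫`, the ε-part of the dual torsion. -/
def τ₁ (v₀ v₁ : ℝ → E3) : ℝ → ℝ :=
  fun s => ⟪deriv (n₀ v₀) s, t₁ v₀ v₁ s⟫ + ⟪deriv (n₁ v₀ v₁) s, t₀ v₀ s⟫

/-- The striction curve `σ(s) = r(s) - ⟪r'(s), e'(s)⟫ • e(s)`. -/
def strict (v₀ v₁ : ℝ → E3) : ℝ → E3 :=
  fun s => r v₀ v₁ s - ⟪deriv (r v₀ v₁) s, deriv (e v₀) s⟫ • e v₀ s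

end Ruled

open Ruled

theorem aux_inner (u v : E3) : ⟪u, v⟫ = u 0 * v 0 + u 1 * v 1 + u 2 * v 2 := by
  simp [PiLp.inner_apply, Fin.sum_univ_three]; ring

theorem aux_c0 (u v : E3) : cross u v 0 = u 1 * v 2 - u 2 * v 1 := by simp [cross]
theorem aux_c1 (u v : E3) : cross u v 1 = u 2 * v 0 - u 0 * v 2 := by simp [cross]
theorem aux_c2 (u v : E3) : cross u v 2 = u 0 * v 1 - u 1 * v 0 := by simp [cross]

theorem aux_coord {f : ℝ → E3} {f' : E3} {s : ℝ} (hf : HasDerivAt f f' s) (i : Fin 3) :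
    HasDerivAt (fun s => f s i) (f' i) s :=
  (EuclideanSpace.proj (𝕜 := ℝ) i).hasFDerivAt.comp_hasDerivAt s hf

theorem aux_of_coord {f : ℝ → E3} {f' : E3} {s : ℝ}
    (h : ∀ i, HasDerivAt (fun s => f s i) (f' i) s) : HasDerivAt f f' s := by
  have h1 : HasDerivAt (fun s => (f s).ofLp) f'.ofLp s := hasDerivAt_pi.2 h
  exact (PiLp.hasFDerivAt_toLp (𝕜 := ℝ) 2 (f s).ofLp).comp_hasDerivAt s h1

theorem aux_deriv {f g : ℝ → E3} {f' g' : E3} {s : ℝ} (hf : HasDerivAt f f' s)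
    (hg : HasDerivAt g g' s) :
    HasDerivAt (fun s => cross (f s) (g s)) (cross (f s) g' + cross f' (g s)) s := by
  have Hf := aux_coord hf
  have Hg := aux_coord hg
  refine aux_of_coord ?_
  intro i
  fin_cases i
  · simp only [Fin.zero_eta, Fin.mk_one, Fin.reduceFinMk, PiLp.add_apply, aux_c0]
    refine HasDerivAt.congr_deriv (((Hf 1).mul (Hg 2)).sub ((Hf 2).mul (Hg 1))) ?_
    ring
  · simp only [Fin.zero_eta, Fin.mk_one, Fin.reduceFinMk, PiLp.add_apply, aux_c1]
    refine HasDerivAt.congr_deriv (((Hf 2).mul (Hg 0)).sub ((Hf 0).mul (Hg 2))) ?_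
    ring
  · simp only [Fin.zero_eta, Fin.mk_one, Fin.reduceFinMk, PiLp.add_apply, aux_c2]
    refine HasDerivAt.congr_deriv (((Hf 0).mul (Hg 1)).sub ((Hf 1).mul (Hg 0))) ?_
    ring

theorem aux_frame (x p z : E3) (hx : ⟪x, x⟫ = 1) (hp : ⟪p, p⟫ = 1) (hxp : ⟪x, p⟫ = 0) :
    z = ⟪z, x⟫ • x + ⟪z, p⟫ • p + ⟪z, cross x p⟫ • cross x p := by
  rw [aux_inner] at hx hp hxp
  let M : Matrix (Fin 3) (Fin 3) ℝ :=
    !![x 0, x 1, x 2; p 0, p 1, p 2; cross x p 0, cross x p 1, cross x p 2]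
  have h1 : M * M.transpose = 1 := by
    ext i j
    fin_cases i <;> fin_cases j <;>
      simp [M, Matrix.mul_apply, Fin.sum_univ_three, aux_c0, aux_c1, aux_c2] <;>
      first
      | ring1
      | linear_combination hx
      | linear_combination hp
      | linear_combination hxp
      | linear_combination (p 0 * p 0 + p 1 * p 1 + p 2 * p 2) * hx + hp -
          (x 0 * p 0 + x 1 * p 1 + x 2 * p 2) * hxp
  have h2 : M.transpose * M = 1 := mul_eq_one_comm.1 h1
  have h3 : ∀ i j, (M.transpose * M) i j = (1 : Matrix (Fin 3) (Fin 3) ℝ) i j := by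
    intro i j; rw [h2]
  have a00 := h3 0 0
  have a01 := h3 0 1
  have a02 := h3 0 2
  have a11 := h3 1 1
  have a12 := h3 1 2
  have a22 := h3 2 2
  simp [M, Matrix.mul_apply, Fin.sum_univ_three] at a00 a01 a02 a11 a12 a22
  ext i
  simp only [aux_inner]
  generalize cross x p = c at *
  fin_cases i <;> simp
  · linear_combination (-z 0) * a00 - z 1 * a01 - z 2 * a02
  · linear_combination (-z 0) * a01 - z 1 * a11 - z 2 * a12
  · linear_combination (-z 0) * a02 - z 1 * a12 - z 2 * a22

theorem aux_alg (x p q y u w : E3) (hx : ⟪x, x⟫ = 1) (hp : ⟪p, p⟫ = 1) (hxp : ⟪x, p⟫ = 0)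
    (hxq : ⟪x, q⟫ = -1) (hpq : ⟪p, q⟫ = 0) (hxy : ⟪x, y⟫ = 0) (hpu : ⟪p, u⟫ = 0) :
    (cross x u + cross p y) - (⟪cross x u, p⟫ • p
      + (⟪cross x u, q⟫ + ⟪cross x w + cross p u, p⟫) • x)
      = (⟪q, cross x u + cross y p⟫ + ⟪w, cross x p⟫) • x := by
  have hq := aux_frame x p q hx hp hxp
  have hu := aux_frame x p u hx hp hxp
  have hy := aux_frame x p y hx hp hxp
  rw [real_inner_comm, hxq, real_inner_comm, hpq] at hq
  rw [real_inner_comm p u, hpu] at hu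
  rw [real_inner_comm x y, hxy] at hy
  generalize ⟪q, cross x p⟫ = q2 at *
  generalize ⟪u, cross x p⟫ = u2 at *
  generalize ⟪u, x⟫ = u0 at *
  generalize ⟪y, cross x p⟫ = y2 at *
  generalize ⟪y, p⟫ = y1 at *
  -- cross-product table
  rw [aux_inner] at hx hp hxp
  have c1 : cross x (cross x p) = -p := by
    ext i; fin_cases i <;> simp [aux_c0, aux_c1, aux_c2] 
    · linear_combination x 0 * hxp - p 0 * hx
    · linear_combination x 1 * hxp - p 1 * hx
    · linear_combination x 2 * hxp - p 2 * hx
  have c2 : cross p (cross x p) = x := by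
    ext i; fin_cases i <;> simp [aux_c0, aux_c1, aux_c2] 
    · linear_combination x 0 * hp - p 0 * hxp
    · linear_combination x 1 * hp - p 1 * hxp
    · linear_combination x 2 * hp - p 2 * hxp
  have d1 : cross x u = -(u2 • p) := by
    have : cross x u = u2 • cross x (cross x p) := by
      rw [hu]
      ext i; fin_cases i <;> simp [aux_c0, aux_c1, aux_c2] <;> ring
    rw [this, c1, smul_neg]
  have d2 : cross p y = y2 • x := by
    have : cross p y = y2 • cross p (cross x p) := by
      rw [hy]
      ext i; fin_cases i <;> simp [aux_c0, aux_c1, aux_c2] <;> ring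
    rw [this, c2]
  have d3 : cross y p = -(y2 • x) := by
    rw [← d2]
    ext i; fin_cases i <;> simp [aux_c0, aux_c1, aux_c2] <;> ring
  have d4 : ⟪cross p u, p⟫ = 0 := by
    simp only [aux_inner, aux_c0, aux_c1, aux_c2]; ring
  have d5 : ⟪cross x w, p⟫ = -⟪w, cross x p⟫ := by
    simp only [aux_inner, aux_c0, aux_c1, aux_c2]; ring
  have hp' : ⟪p, p⟫ = 1 := by rw [aux_inner]; exact hp
  rw [d1, d2, d3, inner_add_left, d4, d5]
  simp only [inner_neg_left, inner_neg_right, inner_add_right, inner_smul_left, inner_smul_right,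
    real_inner_comm p q, real_inner_comm x q, hpq, hxq, hp']
  simp
  module

theorem aux_main
    (I : Set ℝ) (v₀ v₁ : ℝ → E3)
    (hI : IsOpen I)
    (hv₀ : ContDiffOn ℝ (⊤ : ℕ∞) v₀ I) (hv₁ : ContDiffOn ℝ (⊤ : ℕ∞) v₁ I)
    (hunit : ∀ s ∈ I, ‖v₀ s‖ = 1) (horth : ∀ s ∈ I, ⟪v₀ s, v₁ s⟫ = 0)
    (harc : ∀ s ∈ I, ‖deriv v₀ s‖ = 1)
    (hdev : ∀ s ∈ I, κ₁ v₀ v₁ s = 0) (s : ℝ) (hs : s ∈ I) :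
    deriv (strict v₀ v₁) s = τ₁ v₀ v₁ s • v₀ s := by
  have dd : ∀ f : ℝ → E3, ContDiffOn ℝ (⊤ : ℕ∞) f I → ∀ s ∈ I, HasDerivAt f (deriv f s) s := by
    intro f hf s hs
    exact ((hf.differentiableOn (by simp)).differentiableAt (hI.mem_nhds hs)).hasDerivAt
  have hd0 : ContDiffOn ℝ (⊤ : ℕ∞) (deriv v₀) I := hv₀.deriv_of_isOpen hI (by simp)
  have hd1 : ContDiffOn ℝ (⊤ : ℕ∞) (deriv v₁) I := hv₁.deriv_of_isOpen hI (by simp)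
  have hx : ∀ s ∈ I, ⟪v₀ s, v₀ s⟫ = 1 := by
    intro s hs; rw [real_inner_self_eq_norm_sq, hunit s hs]; norm_num
  have hp : ∀ s ∈ I, ⟪deriv v₀ s, deriv v₀ s⟫ = 1 := by
    intro s hs; rw [real_inner_self_eq_norm_sq, harc s hs]; norm_num
  have key : ∀ (f : ℝ → ℝ) (c f' : ℝ), (∀ s ∈ I, f s = c) → ∀ s ∈ I, HasDerivAt f f' s → f' = 0 := by
    intro f c f' hf s hs h
    refine h.unique ((hasDerivAt_const s c).congr_of_eventuallyEq ?_)
    filter_upwards [hI.mem_nhds hs] with a ha using hf a ha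
  have hxp : ∀ s ∈ I, ⟪v₀ s, deriv v₀ s⟫ = 0 := by
    intro s hs
    have := key _ 1 _ hx s hs ((dd _ hv₀ s hs).inner ℝ (dd _ hv₀ s hs))
    rw [real_inner_comm (v₀ s)] at this
    linarith
  have hxq : ⟪v₀ s, deriv (deriv v₀) s⟫ = -1 := by
    have := key _ 0 _ hxp s hs ((dd _ hv₀ s hs).inner ℝ (dd _ hd0 s hs))
    rw [hp s hs] at this
    linarith
  have hpq : ⟪deriv v₀ s, deriv (deriv v₀) s⟫ = 0 := by
    have := key _ 1 _ hp s hs ((dd _ hd0 s hs).inner ℝ (dd _ hd0 s hs))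
    rw [real_inner_comm (deriv v₀ s)] at this
    linarith
  have hr : ∀ s ∈ I, HasDerivAt (r v₀ v₁)
      (cross (v₀ s) (deriv v₁ s) + cross (deriv v₀ s) (v₁ s)) s :=
    fun s hs => aux_deriv (dd _ hv₀ s hs) (dd _ hv₁ s hs)
  have hlam : ∀ s ∈ I, ⟪deriv (r v₀ v₁) s, deriv (e v₀) s⟫
      = ⟪cross (v₀ s) (deriv v₁ s), deriv v₀ s⟫ := by
    intro s hs
    rw [(hr s hs).deriv]
    simp only [e, inner_add_left]
    have : ⟪cross (deriv v₀ s) (v₁ s), deriv v₀ s⟫ = 0 := by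
      simp only [aux_inner, aux_c0, aux_c1, aux_c2]; ring
    rw [this, add_zero]
  have hlam' := (aux_deriv (dd _ hv₀ s hs) (dd _ hd1 s hs)).inner ℝ (dd _ hd0 s hs)
  have hσ := (hr s hs).sub (hlam'.smul (dd _ hv₀ s hs))
  have hev : strict v₀ v₁ =ᶠ[nhds s] (r v₀ v₁ - (fun s =>
      ⟪cross (v₀ s) (deriv v₁ s), deriv v₀ s⟫) • v₀) := by
    filter_upwards [hI.mem_nhds hs] with a ha
    rw [strict, hlam a ha]; rfl
  have hn1 : n₁ v₀ v₁ =ᶠ[nhds s] deriv v₁ := by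
    filter_upwards [hI.mem_nhds hs] with a ha
    simp only [n₁, hdev a ha, zero_smul, sub_zero]
  rw [(hσ.congr_of_eventuallyEq hev).deriv]
  have hA := aux_alg (v₀ s) (deriv v₀ s) (deriv (deriv v₀) s) (v₁ s) (deriv v₁ s)
    (deriv (deriv v₁) s) (hx s hs) (hp s hs) (hxp s hs) hxq hpq (horth s hs) (hdev s hs)
  rw [hA]
  simp only [τ₁, t₁, t₀, hn1.deriv_eq, hn1.eq_of_nhds]
  rfl

/-- A non-cylindrical developable surface is the tangent developable of its striction
curve: `F(s,t) = σ(s) + ((t + ⟪r'(s), e'(s)⟫)/τ₁(s)) • σ'(s)` wherever `τ₁(s) ≠ 0`. -/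
theorem developable_is_tangent_developable
    (I : Set ℝ) (v₀ v₁ : ℝ → E3)
    (hI : IsOpen I) (hI' : I.OrdConnected)
    (hv₀ : ContDiffOn ℝ (⊤ : ℕ∞) v₀ I) (hv₁ : ContDiffOn ℝ (⊤ : ℕ∞) v₁ I)
    (hunit : ∀ s ∈ I, ‖v₀ s‖ = 1) (horth : ∀ s ∈ I, ⟪v₀ s, v₁ s⟫ = 0)
    (harc : ∀ s ∈ I, ‖deriv v₀ s‖ = 1)
    (hdev : ∀ s ∈ I, κ₁ v₀ v₁ s = 0) :
    ∀ s ∈ I, τ₁ v₀ v₁ s ≠ 0 → ∀ t : ℝ,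
      F v₀ v₁ s t = strict v₀ v₁ s +
        ((t + ⟪deriv (r v₀ v₁) s, deriv (e v₀) s⟫) / τ₁ v₀ v₁ s) • deriv (strict v₀ v₁) s := by
  intro s hs hτ t
  rw [aux_main I v₀ v₁ hI hv₀ hv₁ hunit horth harc hdev s hs, smul_smul, div_mul_cancel₀ _ hτ]
  simp only [F, strict, e]
  module
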